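/- arXiv:quant-ph/0512012 — 2 statements merged into one kernel-verified Lean document; each statement's English description precedes it below -/
import Mathlib

section
/- Let d ≥ 2 and 2 ≤ n ≤ d, and let ρ_g = (𝟙 − Z)/(d² − d). For every real β with (d−n)/n ≤ β < (d−n+1)/(n−1), the matrix (β ρ_g + P_+)/(1+β) has Schmidt number exactly n, i.e. it has Schmidt number at most n but does not have Schmidt number at most n−1. -/
open Matrix BigOperators Kronecker ComplexOrder

/-- The d×d matrix `M_v` associated with a vector `v` on ℂ^d ⊗ ℂ^d, `(M_v)_{ij} = v (i,j)`. -/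
def toMat (d : ℕ) (v : Fin d × Fin d → ℂ) : Matrix (Fin d) (Fin d) ℂ :=
  Matrix.of fun i j => v (i, j)

/-- `ρ` has Schmidt number at most `n`: it is a finite sum of `w wᴴ` with each `w` of
Schmidt rank (i.e. rank of the associated d×d matrix) at most `n`. -/
def SchmidtNumberLE (d : ℕ) (ρ : Matrix (Fin d × Fin d) (Fin d × Fin d) ℂ) (n : ℕ) : Prop :=
  ∃ (k : ℕ) (w : Fin k → (Fin d × Fin d → ℂ)),
    (∀ i, (toMat d (w i)).rank ≤ n) ∧
    ρ = ∑ i, Matrix.vecMulVec (w i) (star (w i))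

/-- The maximally entangled unit vector `ψ₊ = (1/√d) Σ_i |ii⟩`. -/
noncomputable def psiPlus (d : ℕ) : Fin d × Fin d → ℂ :=
  fun p => if p.1 = p.2 then (((Real.sqrt d)⁻¹ : ℝ) : ℂ) else 0

/-- `P₊ = ψ₊ ψ₊ᴴ`. -/
noncomputable def Pplus (d : ℕ) : Matrix (Fin d × Fin d) (Fin d × Fin d) ℂ :=
  Matrix.vecMulVec (psiPlus d) (star (psiPlus d))

/-- `Z = Σ_i |ii⟩⟨ii|`. -/
noncomputable def Zmat (d : ℕ) : Matrix (Fin d × Fin d) (Fin d × Fin d) ℂ :=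
  Matrix.diagonal (fun p => if p.1 = p.2 then (1 : ℂ) else 0)


lemma SN_fin {d n : ℕ} {ι : Type*} [Fintype ι] (w : ι → (Fin d × Fin d → ℂ))
    (h : ∀ i, (toMat d (w i)).rank ≤ n) :
    SchmidtNumberLE d (∑ i, Matrix.vecMulVec (w i) (star (w i))) n := by
  refine ⟨Fintype.card ι, w ∘ (Fintype.equivFin ι).symm, fun i => h _, ?_⟩
  exact (Equiv.sum_comp (Fintype.equivFin ι).symm
    (fun i => Matrix.vecMulVec (w i) (star (w i)))).symm

lemma SN_smul {d n : ℕ} {ρ : Matrix (Fin d × Fin d) (Fin d × Fin d) ℂ}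
    (h : SchmidtNumberLE d ρ n) (c : ℝ) (hc : 0 ≤ c) : SchmidtNumberLE d (c • ρ) n := by
  obtain ⟨k, w, hw, rfl⟩ := h
  refine ⟨k, fun i => ((Real.sqrt c : ℝ) : ℂ) • w i, fun i => ?_, ?_⟩
  · have : toMat d (((Real.sqrt c : ℝ) : ℂ) • w i)
        = (((Real.sqrt c : ℝ) : ℂ) • (1 : Matrix (Fin d) (Fin d) ℂ)) * toMat d (w i) := by
      ext a b; simp [toMat]
    rw [this]
    exact (Matrix.rank_mul_le_right _ _).trans (hw i)
  · rw [Finset.smul_sum]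
    refine Finset.sum_congr rfl fun i _ => ?_
    ext a b
    have : ((c : ℝ) : ℂ) = (Real.sqrt c : ℂ) * (Real.sqrt c : ℂ) := by
      rw [← Complex.ofReal_mul, Real.mul_self_sqrt hc]
    simp [Matrix.vecMulVec_apply, this]
    ring

lemma SN_add {d n : ℕ} {ρ τ : Matrix (Fin d × Fin d) (Fin d × Fin d) ℂ}
    (h : SchmidtNumberLE d ρ n) (h' : SchmidtNumberLE d τ n) : SchmidtNumberLE d (ρ + τ) n := by
  obtain ⟨k, w, hw, rfl⟩ := h
  obtain ⟨k', w', hw', rfl⟩ := h'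
  have := SN_fin (d := d) (n := n) (Sum.elim w w') (by rintro (i | i); exacts [hw i, hw' i])
  simpa using this

lemma SN_offdiag (d n : ℕ) (hn : 1 ≤ n) :
    SchmidtNumberLE d ((1 : Matrix (Fin d × Fin d) (Fin d × Fin d) ℂ) - Zmat d) n := by
  have := SN_fin (d := d) (n := n) (fun p : Fin d × Fin d =>
    if p.1 = p.2 then 0 else Pi.single p (1 : ℂ)) (by
      rintro ⟨a, b⟩
      refine le_trans ?_ hn
      by_cases hab : a = b
      · have : toMat d (0 : Fin d × Fin d → ℂ) = 0 := by ext; simp [toMat]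
        simp [hab, this]
      · have : toMat d (Pi.single (a, b) (1 : ℂ)) =
            Matrix.vecMulVec (Pi.single a 1) (Pi.single b 1) := by
          ext i j
          simp only [toMat, Matrix.of_apply, Matrix.vecMulVec_apply, Pi.single_apply, Prod.mk.injEq]
          split_ifs <;> simp_all
        simp only [hab, if_false, this]
        exact Matrix.rank_vecMulVec_le _ _)
  convert this using 1
  ext p q
  rw [Matrix.sum_apply]
  simp only [Matrix.sub_apply, Zmat, Matrix.diagonal_apply, Matrix.one_apply, Matrix.vecMulVec_apply]
  rw [Finset.sum_eq_single p]
  · by_cases hp : p.1 = p.2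
    · simp [hp]
    · by_cases hpq : p = q
      · subst hpq; simp [hp]
      · simp [hp, hpq, Ne.symm hpq]
  · intro r _ hr
    by_cases h : r.1 = r.2 <;> simp [h, Pi.single_apply, Ne.symm hr]
  · simp

lemma rank_factor {d : ℕ} (M : Matrix (Fin d) (Fin d) ℂ) :
    ∃ (U : Matrix (Fin d) (Fin M.rank) ℂ) (V : Matrix (Fin M.rank) (Fin d) ℂ),
      Uᴴ * U = 1 ∧ M = U * V := by
  let S : Submodule ℂ (EuclideanSpace ℂ (Fin d)) :=
    Submodule.span ℂ (Set.range fun j => WithLp.toLp 2 (M.col j))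
  have hr : Module.finrank ℂ S = M.rank := by
    rw [Matrix.rank_eq_finrank_span_cols]
    have : S = (Submodule.span ℂ (Set.range M.col)).map
        (WithLp.linearEquiv 2 ℂ (Fin d → ℂ)).symm.toLinearMap := by
      rw [Submodule.map_span, ← Set.range_comp]
      rfl
    rw [this]
    exact LinearEquiv.finrank_map_eq _ _
  let b : OrthonormalBasis (Fin M.rank) ℂ S := (stdOrthonormalBasis ℂ S).reindex (finCongr hr)
  have hm : ∀ j, WithLp.toLp 2 (M.col j) ∈ S := fun j => Submodule.subset_span ⟨j, rfl⟩
  refine ⟨Matrix.of fun i k => (b k : EuclideanSpace ℂ (Fin d)) i,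
    Matrix.of fun k j => b.repr ⟨_, hm j⟩ k, ?_, ?_⟩
  · ext k l
    have := orthonormal_iff_ite.mp b.orthonormal k l
    rw [Submodule.coe_inner, PiLp.inner_apply] at this
    rw [Matrix.mul_apply, Matrix.one_apply, ← this]
    refine Finset.sum_congr rfl fun i _ => ?_
    simp [mul_comm]
  · ext i j
    have := congrArg (fun x : S => (x : EuclideanSpace ℂ (Fin d)) i) (b.sum_repr ⟨_, hm j⟩)
    simp only [Submodule.coe_sum, Submodule.coe_smul] at this
    simp only [WithLp.ofLp_sum, Finset.sum_apply, PiLp.smul_apply, smul_eq_mul] at this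
    rw [Matrix.mul_apply]
    simp only [Matrix.of_apply]
    rw [show M i j = M.col j i from rfl, ← this]
    exact Finset.sum_congr rfl fun k _ => mul_comm _ _

lemma trace_frob {m k : Type*} [Fintype m] [Fintype k] (A : Matrix m k ℂ) :
    (Aᴴ * A).trace = ((∑ i, ∑ j, ‖A i j‖ ^ 2 : ℝ) : ℂ) := by
  simp only [Matrix.trace, Matrix.diag, Matrix.mul_apply, Matrix.conjTranspose_apply]
  rw [Finset.sum_comm]
  push_cast
  refine Finset.sum_congr rfl fun i _ => Finset.sum_congr rfl fun j _ => ?_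
  exact Complex.conj_mul' _

lemma trace_sq_le {d : ℕ} (M : Matrix (Fin d) (Fin d) ℂ) :
    ‖M.trace‖ ^ 2 ≤ M.rank * ∑ i, ∑ j, ‖M i j‖ ^ 2 := by
  obtain ⟨U, V, hU, hM⟩ := rank_factor M
  have h1 : (∑ i, ∑ j, ‖U i j‖ ^ 2 : ℝ) = M.rank := by
    have := trace_frob U
    rw [hU, Matrix.trace_one, Fintype.card_fin] at this
    exact_mod_cast this.symm
  have h2 : (∑ i, ∑ j, ‖V i j‖ ^ 2 : ℝ) = ∑ i, ∑ j, ‖M i j‖ ^ 2 := by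
    have a := trace_frob V
    have b := trace_frob M
    have : Mᴴ * M = Vᴴ * V := by
      conv_lhs => rw [hM]
      rw [Matrix.conjTranspose_mul, Matrix.mul_assoc, ← Matrix.mul_assoc Uᴴ, hU, Matrix.one_mul]
    rw [this, a] at b
    exact_mod_cast b
  rw [← h2, ← h1]
  have h3 : ‖M.trace‖ ≤ ∑ p : Fin d × Fin M.rank, ‖U p.1 p.2‖ * ‖V p.2 p.1‖ := by
    conv_lhs => rw [hM]
    simp only [Matrix.trace, Matrix.diag, Matrix.mul_apply]
    rw [← Fintype.sum_prod_type' (f := fun i k => U i k * V k i)]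
    refine (norm_sum_le _ _).trans (le_of_eq ?_)
    simp
  calc ‖M.trace‖ ^ 2 ≤ (∑ p : Fin d × Fin M.rank, ‖U p.1 p.2‖ * ‖V p.2 p.1‖) ^ 2 := by gcongr
    _ ≤ (∑ p : Fin d × Fin M.rank, ‖U p.1 p.2‖ ^ 2) * ∑ p : Fin d × Fin M.rank, ‖V p.2 p.1‖ ^ 2 :=
      Finset.sum_mul_sq_le_sq_mul_sq _ _ _
    _ = _ := by
      rw [Fintype.sum_prod_type, Fintype.sum_prod_type_right (f := fun p : Fin d × Fin M.rank => ‖V p.2 p.1‖ ^ 2)]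

lemma SN_bound {d n : ℕ} {ρ : Matrix (Fin d × Fin d) (Fin d × Fin d) ℂ}
    (h : SchmidtNumberLE d ρ n) :
    (∑ i, ∑ j, ρ (i, i) (j, j)).re ≤ n * (ρ.trace).re := by
  obtain ⟨k, w, hw, rfl⟩ := h
  have h1 : (∑ i, ∑ j, (∑ a, vecMulVec (w a) (star (w a))) (i, i) (j, j))
      = ((∑ a, ‖(toMat d (w a)).trace‖ ^ 2 : ℝ) : ℂ) := by
    simp only [Matrix.sum_apply, vecMulVec_apply]
    rw [Finset.sum_congr rfl fun i _ => Finset.sum_comm, Finset.sum_comm]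
    push_cast
    refine Finset.sum_congr rfl fun a _ => ?_
    rw [← Complex.mul_conj', Matrix.trace, map_sum, Finset.sum_mul_sum]
    rfl
  have h2 : (∑ a, vecMulVec (w a) (star (w a))).trace
      = ((∑ a, ∑ i, ∑ j, ‖toMat d (w a) i j‖ ^ 2 : ℝ) : ℂ) := by
    rw [Matrix.trace_sum]
    push_cast
    refine Finset.sum_congr rfl fun a _ => ?_
    rw [Matrix.trace, Fintype.sum_prod_type]
    refine Finset.sum_congr rfl fun i _ => Finset.sum_congr rfl fun j _ => ?_
    rw [← Complex.mul_conj']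
    rfl
  rw [h1, h2, Complex.ofReal_re, Complex.ofReal_re, Finset.mul_sum]
  refine Finset.sum_le_sum fun a _ => (trace_sq_le _).trans ?_
  have : ((toMat d (w a)).rank : ℝ) ≤ n := by exact_mod_cast hw a
  gcongr

lemma fourierMat (d n : ℕ) (hd : 1 ≤ d) (hnd : n ≤ d) :
    ∃ A : Matrix (Fin d) (Fin n) ℂ, Aᴴ * A = 1 ∧ ∀ i, (A * Aᴴ) i i = (n : ℂ) / d := by
  have hd0 : d ≠ 0 := by omega
  have hdc : (d : ℂ) ≠ 0 := by exact_mod_cast hd0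
  set ω : ℂ := Complex.exp (2 * Real.pi * Complex.I / d) with hω
  have hp : IsPrimitiveRoot ω d := Complex.isPrimitiveRoot_exp d hd0
  have hnorm : ‖ω‖ = 1 := hp.norm'_eq_one hd0
  have hω0 : ω ≠ 0 := hp.ne_zero hd0
  have hstar : star ω = ω⁻¹ := by
    rw [Complex.inv_eq_conj hnorm]; rfl
  set s : ℂ := (((Real.sqrt d)⁻¹ : ℝ) : ℂ) with hs
  have hss : s * s = (d : ℂ)⁻¹ := by
    rw [hs, ← Complex.ofReal_mul, ← mul_inv, Real.mul_self_sqrt (by positivity)]; simp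
  have hsstar : star s = s := Complex.conj_ofReal _
  refine ⟨Matrix.of fun i k => s * ω ^ (i.val * k.val), ?_, ?_⟩
  · ext k l
    rw [Matrix.mul_apply, Matrix.one_apply]
    simp only [Matrix.conjTranspose_apply, Matrix.of_apply, star_mul', star_pow, hstar, hsstar]
    have : ∀ i : Fin d, s * ω⁻¹ ^ (i.val * k.val) * (s * ω ^ (i.val * l.val))
        = (d : ℂ)⁻¹ * ((ω⁻¹) ^ k.val * ω ^ l.val) ^ i.val := by
      intro i
      rw [← hss, mul_pow, ← pow_mul, ← pow_mul, mul_comm k.val, mul_comm l.val]; ring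
    rw [Finset.sum_congr rfl fun i _ => this i, ← Finset.mul_sum,
      Fin.sum_univ_eq_sum_range (fun i => ((ω⁻¹) ^ k.val * ω ^ l.val) ^ i)]
    split_ifs with h
    · subst h
      rw [← mul_pow, inv_mul_cancel₀ hω0]
      simp [hdc]
    · have hq : (ω⁻¹) ^ k.val * ω ^ l.val ≠ 1 := by
        intro hq
        apply h
        have : ω ^ l.val = ω ^ k.val := by
          rw [inv_pow] at hq
          field_simp at hq
          exact hq
        have := hp.pow_inj (by omega) (by omega) this
        exact Fin.ext this.symm
      rw [geom_sum_eq hq, mul_pow, ← pow_mul, ← pow_mul, mul_comm k.val, mul_comm l.val, pow_mul,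
        pow_mul, inv_pow, hp.pow_eq_one]
      simp
  · intro i
    rw [Matrix.mul_apply]
    simp only [Matrix.conjTranspose_apply, Matrix.of_apply, star_mul', star_pow, hstar, hsstar]
    have : ∀ k : Fin n, s * ω ^ (i.val * k.val) * (s * ω⁻¹ ^ (i.val * k.val)) = (d : ℂ)⁻¹ := by
      intro k
      rw [← hss, mul_mul_mul_comm, ← mul_pow, mul_inv_cancel₀ hω0]; simp
    rw [Finset.sum_congr rfl fun i _ => this i]
    simp [div_eq_mul_inv]

abbrev G3 : Type := rootsOfUnity 3 ℂ

noncomputable instance instG3 : Fintype G3 := Fintype.ofFinite _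

noncomputable def ph (x : G3) : ℂ := ((x : ℂˣ) : ℂ)

lemma ph_mul (x y : G3) : ph (x * y) = ph x * ph y := by simp [ph]
lemma ph_one : ph 1 = 1 := by simp [ph]
lemma ph_norm (x : G3) : ‖ph x‖ = 1 := by
  have : (ph x) ^ 3 = 1 := by
    have := x.2
    rw [mem_rootsOfUnity'] at this
    exact this
  exact Complex.norm_eq_one_of_pow_eq_one this (by norm_num)
lemma ph_star (x : G3) : ph x * star (ph x) = 1 := by
  have := Complex.mul_conj' (ph x)
  rw [ph_norm] at this
  simpa using this

lemma exists_om : ∃ g : G3, ph g ≠ 1 ∧ ph g ^ 2 ≠ 1 := by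
  have hp := Complex.isPrimitiveRoot_exp 3 (by norm_num)
  refine ⟨hp.toRootsOfUnity, ?_, ?_⟩
  · have := hp.pow_ne_one_of_pos_of_lt (l := 1) (by norm_num) (by norm_num)
    simpa [ph] using this
  · have := hp.pow_ne_one_of_pos_of_lt (l := 2) (by norm_num) (by norm_num)
    simpa [ph] using this

noncomputable def mono {d : ℕ} (i j k l : Fin d) (χ : Fin d → G3) : ℂ :=
  ph (χ i) * star (ph (χ j)) * star (ph (χ k)) * ph (χ l)

lemma mono_mul {d : ℕ} (i j k l : Fin d) (χ η : Fin d → G3) :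
    mono i j k l (χ * η) = mono i j k l χ * mono i j k l η := by
  simp only [mono, Pi.mul_apply, ph_mul, star_mul']; ring

lemma mono_sum_zero {d : ℕ} (i j k l : Fin d) (h1 : ¬ (i = j ∧ k = l)) (h2 : ¬ (i = k ∧ j = l)) :
    ∑ χ : Fin d → G3, mono i j k l χ = 0 := by
  obtain ⟨g, hg1, hg2⟩ := exists_om
  have hs1 : star (ph g) ≠ 1 := fun h => hg1 (by rw [← star_star (ph g), h, star_one])
  have key : ∃ η : Fin d → G3, mono i j k l η ≠ 1 := by
    by_cases hij : i = j
    · have hkl : k ≠ l := fun h => h1 ⟨hij, h⟩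
      refine ⟨Pi.mulSingle k g, ?_⟩
      subst hij
      rw [mono, ph_star]
      simpa [Pi.mulSingle_apply, hkl.symm, ph_one] using hs1
    · by_cases hik : i = k
      · have hjl : j ≠ l := fun h => h2 ⟨hik, h⟩
        refine ⟨Pi.mulSingle j g, ?_⟩
        subst hik
        simpa [mono, Pi.mulSingle_apply, hij, hjl.symm, ph_one] using hs1
      · refine ⟨Pi.mulSingle i g, ?_⟩
        by_cases hil : l = i
        · simpa [mono, Pi.mulSingle_apply, hij, hik, hil, ph_one, Ne.symm hij, Ne.symm hik, ← sq] using hg2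
        · simpa [mono, Pi.mulSingle_apply, hij, hik, hil, ph_one, Ne.symm hij, Ne.symm hik] using hg1
  obtain ⟨η, hη⟩ := key
  have := Equiv.sum_comp (Equiv.mulRight η) (mono i j k l)
  simp only [Equiv.coe_mulRight, mono_mul, ← Finset.sum_mul] at this
  by_contra hne
  exact hη (mul_left_cancel₀ hne (by rw [this, mul_one]))

lemma mono_one {d : ℕ} (i j k l : Fin d) (h : (i = j ∧ k = l) ∨ (i = k ∧ j = l)) (χ : Fin d → G3) :
    mono i j k l χ = 1 := by
  have a := fun m => ph_star (χ m)
  rcases h with ⟨rfl, rfl⟩ | ⟨rfl, rfl⟩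
  · rw [mono, a, one_mul, mul_comm, a]
  · rw [mono, mul_assoc, mul_mul_mul_comm, a, mul_comm (star _), a, one_mul]

lemma two_trans {d : ℕ} {i j k l : Fin d} (h : i ≠ j) (h' : k ≠ l) :
    ∃ τ : Equiv.Perm (Fin d), τ i = k ∧ τ j = l := by
  refine ⟨(Equiv.swap i k).trans (Equiv.swap (Equiv.swap i k j) l), ?_, ?_⟩
  · have : k ≠ Equiv.swap i k j := by
      intro e
      apply h
      have := congrArg (Equiv.swap i k) e
      simpa using this
    simp [Equiv.swap_apply_of_ne_of_ne this h']
  · simp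

/-- average over permutations -/
lemma perm_sum {d : ℕ} (f : Fin d → Fin d → ℝ) {i j : Fin d} (h : i ≠ j) :
    ((d : ℝ) ^ 2 - d) * ∑ σ : Equiv.Perm (Fin d), f (σ i) (σ j)
      = (d.factorial : ℝ) * (∑ k, ∑ l, f k l - ∑ k, f k k) := by
  set F : Fin d → Fin d → ℝ := fun k l => ∑ σ : Equiv.Perm (Fin d), f (σ k) (σ l) with hF
  have hc : ∀ k l, k ≠ l → F k l = F i j := by
    intro k l hkl
    obtain ⟨τ, rfl, rfl⟩ := two_trans h hkl
    exact Equiv.sum_comp (Equiv.mulRight τ) (fun σ : Equiv.Perm (Fin d) => f (σ i) (σ j))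
  have t1 : ∑ k, ∑ l, F k l = (d.factorial : ℝ) * ∑ k, ∑ l, f k l := by
    simp only [hF]
    rw [Finset.sum_congr rfl fun i _ => Finset.sum_comm, Finset.sum_comm]
    rw [Finset.sum_congr rfl (g := fun _ => ∑ k, ∑ l, f k l)]
    · simp [Fintype.card_perm]
    · intro σ _
      rw [← Equiv.sum_comp σ (fun k => ∑ l, f k l)]
      exact Finset.sum_congr rfl fun k _ => Equiv.sum_comp σ (fun l => f (σ k) l)
  have t2 : ∑ k, F k k = (d.factorial : ℝ) * ∑ k, f k k := by
    simp only [hF]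
    rw [Finset.sum_comm]
    rw [Finset.sum_congr rfl (g := fun _ => ∑ k, f k k)]
    · simp [Fintype.card_perm]
    · intro σ _
      exact Equiv.sum_comp σ (fun k => f k k)
  rw [mul_sub, ← t1, ← t2, ← Finset.sum_sub_distrib]
  have : ∀ k, ∑ l, F k l - F k k = ((d : ℝ) - 1) * F i j := by
    intro k
    rw [← Finset.add_sum_erase _ _ (Finset.mem_univ k), add_sub_cancel_left,
      Finset.sum_congr rfl fun l hl => hc k l (Finset.ne_of_mem_erase hl).symm]
    have : 1 ≤ d := by have := k.2; omega
    simp [Finset.card_erase_of_mem, Nat.cast_sub this]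
  rw [Finset.sum_congr rfl fun k _ => this k]
  simp
  ring

lemma SN_main (d n : ℕ) (hd : 2 ≤ d) (hn : 1 ≤ n) (hnd : n ≤ d) :
    SchmidtNumberLE d ((((d : ℝ) - n) / n) • (((d : ℝ) ^ 2 - d)⁻¹ •
          ((1 : Matrix (Fin d × Fin d) (Fin d × Fin d) ℂ) - Zmat d)) + Pplus d) n := by
  obtain ⟨A, hA, hdiag⟩ := fourierMat d n (by omega) hnd
  set P := A * Aᴴ with hP
  have hd0 : (d : ℝ) ≠ 0 := by positivity
  have hn0 : (n : ℝ) ≠ 0 := by positivity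
  have hdd : (d : ℝ) ^ 2 - d ≠ 0 := by
    have : (2 : ℝ) ≤ d := by exact_mod_cast hd
    nlinarith
  have hfrob : ∑ i, ∑ j, ‖P i j‖ ^ 2 = (n : ℝ) := by
    have h := trace_frob P
    have : (Pᴴ * P).trace = n := by
      rw [hP, Matrix.conjTranspose_mul, Matrix.conjTranspose_conjTranspose, Matrix.mul_assoc,
        ← Matrix.mul_assoc Aᴴ, hA, Matrix.one_mul, Matrix.trace_mul_comm, hA]
      simp
    rw [this] at h
    exact_mod_cast h.symm
  have hdg : ∑ i, ‖P i i‖ ^ 2 = (n : ℝ) ^ 2 / d := by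
    simp only [hdiag]
    simp
    field_simp
  let w : Equiv.Perm (Fin d) × (Fin d → G3) → (Fin d × Fin d → ℂ) :=
    fun x p => ph (x.2 p.1) * star (ph (x.2 p.2)) * P (x.1 p.1) (x.1 p.2)
  have hw : ∀ x, (toMat d (w x)).rank ≤ n := by
    rintro ⟨σ, χ⟩
    have : toMat d (w (σ, χ)) = (Matrix.of fun i k => ph (χ i) * A (σ i) k) *
        (Matrix.of fun i k => ph (χ i) * A (σ i) k)ᴴ := by
      ext i j
      simp only [toMat, w, Matrix.of_apply, hP, Matrix.mul_apply, Matrix.conjTranspose_apply,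
        star_mul', Finset.mul_sum]
      refine Finset.sum_congr rfl fun k _ => ?_
      ring
    rw [this]
    exact (Matrix.rank_mul_le_left _ _).trans (Matrix.rank_le_width _)
  set C : ℝ := (Fintype.card (Fin d → G3) : ℝ) with hC
  have hC0 : 0 < C := by
    rw [hC]; exact_mod_cast Fintype.card_pos
  have hf0 : (0 : ℝ) < d.factorial := by exact_mod_cast d.factorial_pos
  have hent : ∀ i j k l, (∑ x, vecMulVec (w x) (star (w x))) (i, j) (k, l)
      = (∑ χ, mono i j k l χ) * ∑ σ : Equiv.Perm (Fin d), P (σ i) (σ j) * star (P (σ k) (σ l)) := by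
    intro i j k l
    rw [Matrix.sum_apply, Fintype.sum_prod_type, Finset.sum_mul_sum, Finset.sum_comm]
    refine Finset.sum_congr rfl fun χ _ => Finset.sum_congr rfl fun σ _ => ?_
    simp only [vecMulVec_apply, w, Pi.star_apply, star_mul', star_star, mono]
    ring
  have h := SN_smul (SN_fin w hw) (d / (n ^ 2 * C * d.factorial)) (by positivity)
  convert h using 1
  ext ⟨i, j⟩ ⟨k, l⟩
  rw [Matrix.smul_apply, hent]
  have hss : (((Real.sqrt d)⁻¹ : ℝ) : ℂ) * (((Real.sqrt d)⁻¹ : ℝ) : ℂ) = ((d : ℝ)⁻¹ : ℝ) := by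
    rw [← Complex.ofReal_mul, ← mul_inv, Real.mul_self_sqrt (by positivity)]
  have hdc : (d : ℂ) ≠ 0 := by exact_mod_cast hd0
  have hnc : (n : ℂ) ≠ 0 := by exact_mod_cast hn0
  have hCc : (C : ℂ) ≠ 0 := by exact_mod_cast hC0.ne'
  have hfc : (d.factorial : ℂ) ≠ 0 := by exact_mod_cast hf0.ne'
  have hmono : ((i = j ∧ k = l) ∨ (i = k ∧ j = l)) → ∑ χ, mono i j k l χ = C := by
    intro hh
    rw [Finset.sum_congr rfl fun χ _ => mono_one i j k l hh χ, hC]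
    simp
  by_cases h1 : i = j ∧ k = l
  · rw [hmono (Or.inl h1)]
    obtain ⟨rfl, rfl⟩ := h1
    have e : ∀ σ : Equiv.Perm (Fin d), P (σ i) (σ i) * star (P (σ k) (σ k)) = (n : ℂ) ^ 2 / d ^ 2 := by
      intro σ
      rw [hdiag, hdiag]
      simp
      field_simp
    rw [Finset.sum_congr rfl fun σ _ => e σ]
    have z : ((1 : Matrix (Fin d × Fin d) (Fin d × Fin d) ℂ) - Zmat d) (i, i) (k, k) = 0 := by
      simp [Zmat, Matrix.one_apply, Matrix.diagonal_apply]
    have q : Pplus d (i, i) (k, k) = ((d : ℝ)⁻¹ : ℝ) := by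
      rw [← hss]
      simp [Pplus, psiPlus, vecMulVec_apply]
    rw [Matrix.add_apply, Matrix.smul_apply, Matrix.smul_apply, z, q]
    simp [Fintype.card_perm]
    field_simp
  · have q : Pplus d (i, j) (k, l) = 0 := by
      simp only [Pplus, psiPlus, vecMulVec_apply, Pi.star_apply]
      by_cases hij : i = j
      · have : k ≠ l := fun h => h1 ⟨hij, h⟩
        simp [this]
      · simp [hij]
    rw [Matrix.add_apply, Matrix.smul_apply, Matrix.smul_apply, q, add_zero]
    by_cases h2 : i = k ∧ j = l
    · rw [hmono (Or.inr h2)]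
      obtain ⟨rfl, rfl⟩ := h2
      have hij : i ≠ j := fun h => h1 ⟨h, h⟩
      have z : ((1 : Matrix (Fin d × Fin d) (Fin d × Fin d) ℂ) - Zmat d) (i, j) (i, j) = 1 := by
        simp [Zmat, hij]
      have ps := perm_sum (fun a b => ‖P a b‖ ^ 2) hij
      simp only [hfrob, hdg] at ps
      have e : ∑ σ : Equiv.Perm (Fin d), P (σ i) (σ j) * star (P (σ i) (σ j))
          = ((∑ σ : Equiv.Perm (Fin d), ‖P (σ i) (σ j)‖ ^ 2 : ℝ) : ℂ) := by
        push_cast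
        exact Finset.sum_congr rfl fun σ _ => Complex.mul_conj' _
      rw [z, e]
      set S := ∑ σ : Equiv.Perm (Fin d), ‖P (σ i) (σ j)‖ ^ 2
      have hS : S = (d.factorial : ℝ) * (n - n ^ 2 / d) / ((d : ℝ) ^ 2 - d) := by
        rw [← ps, mul_div_cancel_left₀ _ hdd]
      have hreal : ((d : ℝ) - n) / n * ((d : ℝ) ^ 2 - d)⁻¹
          = d / (n ^ 2 * C * d.factorial) * (C * S) := by
        rw [hS]
        field_simp
      rw [Complex.real_smul, Complex.real_smul, Complex.real_smul, mul_one, ← Complex.ofReal_mul,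
        ← Complex.ofReal_mul, ← Complex.ofReal_mul, hreal]
    · rw [mono_sum_zero i j k l h1 h2]
      have z : ((1 : Matrix (Fin d × Fin d) (Fin d × Fin d) ℂ) - Zmat d) (i, j) (k, l) = 0 := by
        have : ((i, j) : Fin d × Fin d) ≠ (k, l) := by simpa using h2
        simp [Zmat, Matrix.one_apply, Matrix.diagonal_apply, h2]
      simp [z]

/-- The states `(β ρ_g + P₊)/(1+β)` with `ρ_g = (𝟙-Z)/(d²-d)` have Schmidt number
exactly `n` for `(d-n)/n ≤ β < (d-n+1)/(n-1)`. -/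
theorem schmidt_number_interval (d n : ℕ) (hd : 2 ≤ d) (hn : 2 ≤ n) (hnd : n ≤ d)
    (β : ℝ) (hβ1 : ((d : ℝ) - n) / n ≤ β) (hβ2 : β < ((d : ℝ) - n + 1) / ((n : ℝ) - 1)) :
    SchmidtNumberLE d ((1 + β)⁻¹ •
      (β • (((d : ℝ) ^ 2 - d)⁻¹ •
          ((1 : Matrix (Fin d × Fin d) (Fin d × Fin d) ℂ) - Zmat d)) + Pplus d)) n ∧
    ¬ SchmidtNumberLE d ((1 + β)⁻¹ •
      (β • (((d : ℝ) ^ 2 - d)⁻¹ •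
          ((1 : Matrix (Fin d × Fin d) (Fin d × Fin d) ℂ) - Zmat d)) + Pplus d)) (n - 1) := by
  have hdR : (2 : ℝ) ≤ d := by exact_mod_cast hd
  have hnR : (2 : ℝ) ≤ n := by exact_mod_cast hn
  have hndR : (n : ℝ) ≤ d := by exact_mod_cast hnd
  have hdd : 0 < (d : ℝ) ^ 2 - d := by nlinarith
  have hβ0 : 0 ≤ β := le_trans (div_nonneg (by linarith) (by linarith)) hβ1
  constructor
  · refine SN_smul ?_ _ (by positivity)
    have := SN_add (SN_smul (SN_smul (SN_offdiag d n (by omega)) _ (inv_nonneg.mpr hdd.le))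
      (β - ((d : ℝ) - n) / n) (by linarith)) (SN_main d n hd (by omega) hnd)
    convert this using 1
    rw [← add_assoc, ← add_smul, sub_add_cancel]
  · intro h
    have hb := SN_bound h
    have hss : (((Real.sqrt d)⁻¹ : ℝ) : ℂ) * (((Real.sqrt d)⁻¹ : ℝ) : ℂ) = ((d : ℝ)⁻¹ : ℝ) := by
      rw [← Complex.ofReal_mul, ← mul_inv, Real.mul_self_sqrt (by positivity)]
    have hdc : (d : ℂ) ≠ 0 := by
      have : d ≠ 0 := by omega
      exact_mod_cast this
    have q : ∀ i k, Pplus d (i, i) (k, k) = ((d : ℝ)⁻¹ : ℝ) := by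
      intro i k
      rw [← hss]
      simp [Pplus, psiPlus, vecMulVec_apply]
    have z : ∀ i k, ((1 : Matrix (Fin d × Fin d) (Fin d × Fin d) ℂ) - Zmat d) (i, i) (k, k) = 0 := by
      intro i k
      simp [Zmat, Matrix.one_apply, Matrix.diagonal_apply]
    have tP : (Pplus d).trace = 1 := by
      have : ∀ i j, Pplus d (i, j) (i, j) = if i = j then ((d : ℂ)⁻¹) else 0 := by
        intro i j
        split_ifs with hij
        · subst hij; rw [q]; simp
        · simp [Pplus, psiPlus, vecMulVec_apply, hij]
      rw [Matrix.trace, Fintype.sum_prod_type]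
      simp [Matrix.diag, this, hdc]
    have tZ : ((1 : Matrix (Fin d × Fin d) (Fin d × Fin d) ℂ) - Zmat d).trace
        = (((d : ℝ) ^ 2 - d : ℝ) : ℂ) := by
      rw [Matrix.trace_sub, Matrix.trace_one, Zmat, Matrix.trace_diagonal, Fintype.sum_prod_type]
      simp [sq]
    have t : ((1 + β)⁻¹ • (β • (((d : ℝ) ^ 2 - d)⁻¹ •
          ((1 : Matrix (Fin d × Fin d) (Fin d × Fin d) ℂ) - Zmat d)) + Pplus d)).trace
          = ((1 : ℝ) : ℂ) := by
      rw [Matrix.trace_smul, Matrix.trace_add, Matrix.trace_smul, Matrix.trace_smul, tZ, tP,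
        Complex.real_smul, Complex.real_smul, Complex.real_smul, ← Complex.ofReal_one,
        ← Complex.ofReal_mul, ← Complex.ofReal_mul, ← Complex.ofReal_add, ← Complex.ofReal_mul]
      congr 1
      rw [inv_mul_cancel₀ hdd.ne', mul_one, add_comm β 1, inv_mul_cancel₀ (by positivity)]
    rw [t] at hb
    simp only [Matrix.smul_apply, Matrix.add_apply, z, q, Complex.real_smul, mul_zero, zero_add,
      ← Complex.ofReal_mul, Complex.ofReal_re, Finset.sum_const,
      Finset.card_univ, Fintype.card_fin, nsmul_eq_mul, mul_one, ← Complex.ofReal_natCast] at hb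
    rw [Nat.cast_sub (by omega), Nat.cast_one] at hb
    rw [lt_div_iff₀ (by linarith)] at hβ2
    have e : (d : ℝ) * (d * ((1 + β)⁻¹ * (d : ℝ)⁻¹)) = d / (1 + β) := by
      field_simp
    rw [e, div_le_iff₀ (by linarith)] at hb
    linarith
end

section
/- Upper bound on the generalised Schmidt robustness of a pure state: let d ≥ 2, 1 ≤ n < d, and let ψ = Σ_i a_i |ii⟩ with a_i ≥ 0 and Σ_i a_i² = 1. Then the matrix ψψ† + ((d−n)/((d−1)n)) · Σ_{i≠j} a_i a_j |ij⟩⟨ij| on ℂ^d ⊗ ℂ^d has Schmidt number at most n. -/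
open Matrix BigOperators Kronecker ComplexOrder

/-- The vector `Σ_i a_i |ii⟩`. -/
noncomputable def ketDiag (d : ℕ) (a : Fin d → ℝ) : Fin d × Fin d → ℂ :=
  fun p => if p.1 = p.2 then ((a p.1 : ℝ) : ℂ) else 0


lemma schmidt_of_fintype {ι : Type} [Fintype ι] (d n : ℕ) (c : ℝ) (hc : 0 ≤ c)
    (w : ι → (Fin d × Fin d → ℂ)) (hw : ∀ i, (toMat d (w i)).rank ≤ n)
    (ρ : Matrix (Fin d × Fin d) (Fin d × Fin d) ℂ)
    (h : ∀ p q, ρ p q = (c : ℂ) * ∑ i, w i p * star (w i q)) : SchmidtNumberLE d ρ n := by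
  refine ⟨Fintype.card ι, fun k => (Real.sqrt c : ℂ) • w ((Fintype.equivFin ι).symm k), ?_, ?_⟩
  · intro k
    have : toMat d ((Real.sqrt c : ℂ) • w ((Fintype.equivFin ι).symm k))
        = Matrix.diagonal (fun _ => (Real.sqrt c : ℂ)) * toMat d (w ((Fintype.equivFin ι).symm k)) := by
      ext i j
      simp [toMat, Matrix.diagonal_mul]
    rw [this]
    exact (Matrix.rank_mul_le_right _ _).trans (hw _)
  · ext p q
    rw [h, Matrix.sum_apply, Finset.mul_sum]
    rw [← (Fintype.equivFin ι).symm.sum_comp]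
    refine Finset.sum_congr rfl fun k _ => ?_
    have h2 : (c : ℂ) = (Real.sqrt c : ℂ) * (Real.sqrt c : ℂ) := by
      rw [← Complex.ofReal_mul, Real.mul_self_sqrt hc]
    simp [Matrix.vecMulVec_apply]
    rw [h2]
    ring

lemma exists_frame (d n : ℕ) (hn : 1 ≤ n) (hnd : n < d) :
    ∃ A : Matrix (Fin d) (Fin n) ℂ, (∀ i, (A * Aᴴ) i i = n) ∧
      ∑ i, ∑ j, (A * Aᴴ) i j * star ((A * Aᴴ) i j) = (d : ℂ) ^ 2 * n := by
  haveI : NeZero d := ⟨by omega⟩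
  let e : Fin d ≃ ZMod d := (ZMod.finEquiv d).toEquiv
  let f : Fin n → ZMod d := fun m => e (Fin.castLE hnd.le m)
  have hf : Function.Injective f := fun x y h => by
    simpa [f, Fin.ext_iff] using e.injective h
  let A : Matrix (Fin d) (Fin n) ℂ := Matrix.of fun i m => (ZMod.stdAddChar (e i * f m) : ℂ)
  have hs : ∀ x : ZMod d, star (ZMod.stdAddChar x : ℂ) = ZMod.stdAddChar (-x) := by
    intro x
    rw [AddChar.map_neg_eq_conj]
    rfl
  have hG : Aᴴ * A = (d : ℂ) • (1 : Matrix (Fin n) (Fin n) ℂ) := by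
    ext m m'
    have : ∀ i : Fin d, Aᴴ m i * A i m' = ZMod.stdAddChar (e i * (f m' - f m)) := by
      intro i
      simp only [A, Matrix.conjTranspose_apply, Matrix.of_apply, hs]
      rw [← AddChar.map_add_eq_mul]
      congr 1
      ring
    rw [Matrix.mul_apply, Finset.sum_congr rfl fun i _ => this i,
      e.sum_comp (fun x => (ZMod.stdAddChar (x * (f m' - f m)) : ℂ)),
      AddChar.sum_mulShift _ (ZMod.isPrimitive_stdAddChar d)]
    by_cases h : m = m'
    · subst h; simp
    · have : f m' - f m ≠ 0 := fun h' => h (hf (sub_eq_zero.1 h')).symm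
      simp [h, this]
  refine ⟨A, ?_, ?_⟩
  · intro i
    have : ∀ m, A i m * Aᴴ m i = 1 := by
      intro m
      simp only [A, Matrix.conjTranspose_apply, Matrix.of_apply, hs]
      rw [← AddChar.map_add_eq_mul]
      simp
    rw [Matrix.mul_apply, Finset.sum_congr rfl fun i _ => this i]
    simp
  · have h1 : ∑ i, ∑ j, (A * Aᴴ) i j * star ((A * Aᴴ) i j)
        = Matrix.trace ((A * Aᴴ) * (A * Aᴴ)ᴴ) := by
      simp only [Matrix.trace, Matrix.diag, Matrix.mul_apply (M := A * Aᴴ),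
        Matrix.conjTranspose_apply (A * Aᴴ)]
    have h2 : (A * Aᴴ) * (A * Aᴴ)ᴴ = A * ((Aᴴ * A) * Aᴴ) := by
      simp [Matrix.mul_assoc]
    rw [h1, h2, Matrix.trace_mul_comm, hG]
    simp [Matrix.smul_mul, hG]
    ring

lemma perm_avg (d : ℕ) (f : Fin d → Fin d → ℂ) (i j : Fin d) (hij : i ≠ j) :
    ((d : ℂ) * (d - 1)) * ∑ π : Equiv.Perm (Fin d), f (π i) (π j)
      = (d.factorial : ℂ) * (∑ k, ∑ l, f k l - ∑ k, f k k) := by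
  have key : ∀ k l : Fin d, k ≠ l → ∑ π : Equiv.Perm (Fin d), f (π k) (π l)
      = ∑ π : Equiv.Perm (Fin d), f (π i) (π j) := by
    intro k l hkl
    obtain ⟨σ, h1, h2⟩ : ∃ σ : Equiv.Perm (Fin d), σ k = i ∧ σ l = j := by
      have hne : Equiv.swap k i l ≠ i := by
        intro h
        have : Equiv.swap k i l = Equiv.swap k i k := by simp [h]
        exact hkl ((Equiv.swap k i).injective this).symm
      refine ⟨Equiv.swap (Equiv.swap k i l) j * Equiv.swap k i, ?_, ?_⟩
      · simp [Equiv.swap_apply_of_ne_of_ne hne.symm hij]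
      · simp
    rw [← h1, ← h2]
    exact (Equiv.sum_comp (Equiv.mulRight σ) (fun π : Equiv.Perm (Fin d) => f (π k) (π l))).symm
  have e1 : ∑ k, ∑ l, ∑ π : Equiv.Perm (Fin d), f (π k) (π l)
      = (d.factorial : ℂ) * ∑ k, ∑ l, f k l := by
    have : ∀ π : Equiv.Perm (Fin d), ∑ k, ∑ l, f (π k) (π l) = ∑ k, ∑ l, f k l := by
      intro π
      rw [← Equiv.sum_comp π (fun k => ∑ l, f k l)]
      exact Finset.sum_congr rfl fun k _ => Equiv.sum_comp π (fun l => f (π k) l)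
    rw [Finset.sum_congr rfl fun k _ => Finset.sum_comm, Finset.sum_comm,
      Finset.sum_congr rfl fun π _ => this π]
    simp [Fintype.card_perm]
  have e2 : ∑ k, ∑ π : Equiv.Perm (Fin d), f (π k) (π k)
      = (d.factorial : ℂ) * ∑ k, f k k := by
    rw [Finset.sum_comm,
      Finset.sum_congr rfl fun π _ => Equiv.sum_comp π (fun k => f k k)]
    simp [Fintype.card_perm]
  have e3 : ∀ k l : Fin d, ∑ π : Equiv.Perm (Fin d), f (π k) (π l)
      = ∑ π : Equiv.Perm (Fin d), f (π i) (π j)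
        + if k = l then (∑ π : Equiv.Perm (Fin d), f (π k) (π k)
          - ∑ π : Equiv.Perm (Fin d), f (π i) (π j)) else 0 := by
    intro k l
    by_cases h : k = l
    · subst h; simp
    · simp [h, key k l h]
  rw [mul_sub (d.factorial : ℂ), ← e1, ← e2]
  rw [Finset.sum_congr rfl fun k _ => Finset.sum_congr rfl fun l _ => e3 k l]
  simp [Finset.sum_add_distrib]
  ring

lemma phase_sum (p : ℕ) [Fact p.Prime] (h2 : 2 < p) (x y z w : ZMod p) :
    ∑ s : ZMod p, ∑ t : ZMod p,
      (ZMod.stdAddChar (s * (x - y - z + w) + t * (x ^ 2 - y ^ 2 - z ^ 2 + w ^ 2)) : ℂ)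
      = if (x = y ∧ z = w) ∨ (x = z ∧ y = w) then (p : ℂ) ^ 2 else 0 := by
  have h2' : (2 : ZMod p) ≠ 0 := by
    intro h
    have := (ZMod.natCast_eq_zero_iff 2 p).1 (by exact_mod_cast h)
    have := Nat.le_of_dvd (by norm_num) this
    omega
  have hiff : ((x = y ∧ z = w) ∨ (x = z ∧ y = w)) ↔
      (x - y - z + w = 0 ∧ x ^ 2 - y ^ 2 - z ^ 2 + w ^ 2 = 0) := by
    constructor
    · rintro (⟨rfl, rfl⟩ | ⟨rfl, rfl⟩) <;> constructor <;> ring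
    · rintro ⟨ha, hb⟩
      have hw : w = y + z - x := by linear_combination ha
      subst hw
      have : 2 * ((x - y) * (x - z)) = 0 := by linear_combination hb
      rcases mul_eq_zero.1 ((mul_eq_zero.1 this).resolve_left h2') with h | h
      · have := sub_eq_zero.1 h
        subst this
        left; exact ⟨rfl, by ring⟩
      · have := sub_eq_zero.1 h
        subst this
        right; exact ⟨rfl, by ring⟩
  simp_rw [AddChar.map_add_eq_mul, ← Finset.mul_sum, ← Finset.sum_mul]
  rw [AddChar.sum_mulShift _ (ZMod.isPrimitive_stdAddChar p),
    AddChar.sum_mulShift _ (ZMod.isPrimitive_stdAddChar p), if_congr hiff rfl rfl]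
  by_cases ha : x - y - z + w = 0 <;> by_cases hb : x ^ 2 - y ^ 2 - z ^ 2 + w ^ 2 = 0 <;>
    simp [ha, hb, sq]

/-- Upper bound on the generalised Schmidt robustness of a pure state. -/
theorem upper_bound_generalised_schmidt_robustness (d n : ℕ) (hd : 2 ≤ d) (hn : 1 ≤ n)
    (hnd : n < d) (a : Fin d → ℝ) (ha : ∀ i, 0 ≤ a i) (hnorm : ∑ i, a i ^ 2 = 1) :
    SchmidtNumberLE d
      (Matrix.vecMulVec (ketDiag d a) (star (ketDiag d a)) +
        (((d : ℝ) - n) / (((d : ℝ) - 1) * n)) •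
          Matrix.diagonal (fun p : Fin d × Fin d =>
            if p.1 ≠ p.2 then ((a p.1 * a p.2 : ℝ) : ℂ) else 0)) n := by
  obtain ⟨A, hA1, hA2⟩ := exists_frame d n hn hnd
  obtain ⟨p, hp, hpp⟩ := Nat.exists_infinite_primes (d + 1)
  haveI : Fact p.Prime := ⟨hpp⟩
  have hp2 : 2 < p := by omega
  let x : Fin d → ZMod p := fun i => ((i : ℕ) : ZMod p)
  have hx : Function.Injective x := by
    intro i j h
    have h' := congrArg ZMod.val h
    simp only [x] at h'
    rw [ZMod.val_natCast_of_lt (by omega), ZMod.val_natCast_of_lt (by omega)] at h'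
    exact Fin.ext h'
  set Q := A * Aᴴ with hQ
  let r : Fin d → ℂ := fun i => ((Real.sqrt (a i) : ℝ) : ℂ)
  have hr : ∀ i, r i * r i = (a i : ℂ) := fun i => by
    simp only [r]
    rw [← Complex.ofReal_mul, Real.mul_self_sqrt (ha i)]
  have hrs : ∀ i, star (r i) = r i := fun i => Complex.conj_ofReal _
  let θ : ZMod p → ZMod p → Fin d → ℂ := fun s t i =>
    ZMod.stdAddChar (s * x i + t * x i ^ 2)
  have hs : ∀ x : ZMod p, star (ZMod.stdAddChar x : ℂ) = ZMod.stdAddChar (-x) := by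
    intro x
    rw [AddChar.map_neg_eq_conj]
    rfl
  let W : Equiv.Perm (Fin d) × ZMod p × ZMod p → (Fin d × Fin d → ℂ) := fun g q =>
    (r q.1 * θ g.2.1 g.2.2 q.1) * Q (g.1 q.1) (g.1 q.2) * (r q.2 * star (θ g.2.1 g.2.2 q.2))
  have hnC : (n : ℂ) ≠ 0 := by exact_mod_cast (by omega : n ≠ 0)
  have hdC : (d : ℂ) ≠ 0 := by exact_mod_cast (by omega : d ≠ 0)
  have hd1C : (d : ℂ) - 1 ≠ 0 := by
    rw [sub_ne_zero]; exact_mod_cast (by omega : d ≠ 1)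
  have hpC : (p : ℂ) ≠ 0 := by exact_mod_cast hpp.ne_zero
  have hfC : (d.factorial : ℂ) ≠ 0 := by exact_mod_cast d.factorial_ne_zero
  refine schmidt_of_fintype d n (1 / ((n : ℝ) ^ 2 * d.factorial * (p : ℝ) ^ 2)) (by positivity)
    W ?_ _ ?_
  · rintro ⟨π, s, t⟩
    have : toMat d (W (π, s, t)) = (Matrix.diagonal (fun i => r i * θ s t i) *
        (A.submatrix π id)) * ((Aᴴ.submatrix id π) *
          Matrix.diagonal (fun i => r i * star (θ s t i))) := by
      have e : (Matrix.diagonal (fun i => r i * θ s t i) *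
        (A.submatrix π id)) * ((Aᴴ.submatrix id π) *
          Matrix.diagonal (fun i => r i * star (θ s t i))) =
          Matrix.diagonal (fun i => r i * θ s t i) * (Q.submatrix π π) *
          Matrix.diagonal (fun i => r i * star (θ s t i)) := by
        rw [hQ, ← Matrix.submatrix_mul_equiv A Aᴴ π (Equiv.refl _) π]
        simp only [Matrix.mul_assoc, Equiv.coe_refl]
      rw [e]
      ext i j
      simp [toMat, W, Matrix.diagonal_mul, Matrix.mul_diagonal]
    rw [this]
    refine (Matrix.rank_mul_le_left _ _).trans ?_
    simpa using Matrix.rank_le_card_width (Matrix.diagonal (fun i => r i * θ s t i) *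
        (A.submatrix π id))
  · rintro ⟨i, j⟩ ⟨k, l⟩
    have hsum : ∑ g, W g (i, j) * star (W g (k, l)) = (r i * r j * r k * r l) *
        ((∑ π : Equiv.Perm (Fin d), Q (π i) (π j) * star (Q (π k) (π l))) *
          if (i = j ∧ k = l) ∨ (i = k ∧ j = l) then (p : ℂ) ^ 2 else 0) := by
      have hph := phase_sum p hp2 (x i) (x j) (x k) (x l)
      simp only [hx.eq_iff] at hph
      rw [← hph, Fintype.sum_prod_type, Finset.sum_mul, Finset.mul_sum]
      refine Finset.sum_congr rfl fun π _ => ?_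
      rw [Fintype.sum_prod_type, Finset.mul_sum, Finset.mul_sum]
      refine Finset.sum_congr rfl fun s _ => ?_
      rw [Finset.mul_sum, Finset.mul_sum]
      refine Finset.sum_congr rfl fun t _ => ?_
      have : (ZMod.stdAddChar (s * (x i - x j - x k + x l) +
          t * (x i ^ 2 - x j ^ 2 - x k ^ 2 + x l ^ 2)) : ℂ)
          = θ s t i * star (θ s t j) * star (θ s t k) * θ s t l := by
        simp only [θ, hs]
        simp only [← AddChar.map_add_eq_mul]
        congr 1
        ring
      rw [this]
      simp only [W, star_mul', star_star, hrs]
      ring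
    rw [hsum]
    by_cases hij : i = j
    · subst hij
      by_cases hkl : k = l
      · subst hkl
        have : ∑ π : Equiv.Perm (Fin d), Q (π i) (π i) * star (Q (π k) (π k))
            = (d.factorial : ℂ) * n ^ 2 := by
          simp [hA1, Fintype.card_perm, sq]
        rw [this]
        have h3 : r i * r i * r k * r k = a i * a k := by
          rw [hr, mul_assoc, hr]
        rw [h3]
        simp [Matrix.vecMulVec_apply, ketDiag, Matrix.diagonal_apply]
        field_simp
      · have : ¬ (i = k ∧ i = l) := fun h => hkl (h.1.symm.trans h.2)
        simp [Matrix.vecMulVec_apply, ketDiag, Matrix.diagonal_apply, hkl, this]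
    · by_cases h : i = k ∧ j = l
      · obtain ⟨rfl, rfl⟩ := h
        have hav := perm_avg d (fun k l => Q k l * star (Q k l)) i j hij
        have hdiag : ∑ k, Q k k * star (Q k k) = (d : ℂ) * n ^ 2 := by
          simp [hA1, sq]
        rw [hA2, hdiag] at hav
        have h3 : r i * r j * r i * r j = a i * a j := by
          rw [← hr, ← hr]; ring
        have hav' : ∑ π : Equiv.Perm (Fin d), Q (π i) (π j) * star (Q (π i) (π j))
            = (d.factorial : ℂ) * ((d : ℂ) ^ 2 * n - d * n ^ 2) / ((d : ℂ) * (d - 1)) := by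
          rw [eq_div_iff (mul_ne_zero hdC hd1C), ← hav]; ring
        rw [h3, hav']
        simp [Matrix.vecMulVec_apply, ketDiag, Matrix.diagonal_apply, hij]
        field_simp
      · have h' : ¬ ((i, j) = (k, l)) := by simpa using h
        simp [Matrix.vecMulVec_apply, ketDiag, Matrix.diagonal_apply, hij, h]
end
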